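/- Let X be a uniformizable topological space and suppose X is k-primal for some k ≥ 1, i.e., there exist self-maps f₁, …, f_k : X → X such that for every a ∈ X the set V_{f₁}(a) ∩ ⋯ ∩ V_{f_k}(a) is the smallest open neighbourhood of a. Then X is a functional Alexandroff space, i.e., there exists a single self-map f : X → X such that the topology of X equals the functional Alexandroff topology corresponding to f. -/

import Mathlib

open Set

variable {X : Type*}

/-- `V a` : the intersection of all open neighbourhoods of `a`. -/
def V [TopologicalSpace X] (a : X) : Set X :=
  ⋂₀ {U : Set X | IsOpen U ∧ a ∈ U}

/-- A topological space is uniformizable if its topology is induced by some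
uniform structure. -/
def Uniformizable (X : Type*) [t : TopologicalSpace X] : Prop :=
  ∃ u : UniformSpace X, u.toTopologicalSpace = t

/-- `Vf f a = ⋃ₙ f⁻ⁿ(a)` : the union of the preimages of `{a}` under all
iterates of `f` (including the 0-th iterate). -/
def Vf (f : X → X) (a : X) : Set X :=
  ⋃ n : ℕ, (f^[n]) ⁻¹' {a}

/-- The functional Alexandroff topology on `X` corresponding to `f`, generated
by the basis `{Vf f a : a ∈ X}`. -/
def funcAlexTop (f : X → X) : TopologicalSpace X :=
  TopologicalSpace.generateFrom {S : Set X | ∃ a : X, S = Vf f a}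

/-- A topological space is functional Alexandroff if its topology is the
functional Alexandroff topology corresponding to some self-map. -/
def IsFunctionalAlexandroff (X : Type*) [t : TopologicalSpace X] : Prop :=
  ∃ f : X → X, t = funcAlexTop f

lemma mem_V_iff_specializes [TopologicalSpace X] {a b : X} : b ∈ V a ↔ b ⤳ a := by
  simp only [V, mem_sInter, mem_ofPred_eq, and_imp, specializes_iff_forall_open]

lemma V_eq_of_mem [TopologicalSpace X] [R0Space X] {a b : X} (h : b ∈ V a) : V b = V a := by
  rw [mem_V_iff_specializes] at h
  ext c
  simp only [mem_V_iff_specializes]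
  exact ⟨fun hc => hc.trans h, fun hc => hc.trans (specializes_comm.1 h)⟩

lemma mem_V_self [TopologicalSpace X] (a : X) : a ∈ V a :=
  mem_V_iff_specializes.2 specializes_rfl

lemma mem_Vf {f : X → X} {a b : X} : b ∈ Vf f a ↔ ∃ n : ℕ, f^[n] b = a := by
  simp [Vf]

/-- If every two points of `s` are mapped to each other by iterates of `g`, then `s` is finite:
it lies in a single periodic orbit. -/
lemma finite_of_forall_mem_Vf {g : X → X} {s : Set X}
    (h : ∀ a ∈ s, ∀ b ∈ s, b ∈ Vf g a) : s.Finite := by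
  rcases s.subsingleton_or_nontrivial with hs | ⟨a, ha, b, hb, hab⟩
  · exact hs.finite
  obtain ⟨m, hm⟩ := mem_Vf.1 (h a ha b hb)
  obtain ⟨n, hn⟩ := mem_Vf.1 (h b hb a ha)
  have hn0 : n ≠ 0 := by
    rintro rfl
    exact hab hn
  have hper : Function.IsPeriodicPt g (m + n) a := by
    rw [Function.IsPeriodicPt, Function.IsFixedPt, Function.iterate_add_apply, hn, hm]
  refine ((finite_Iio (m + n)).image fun i => g^[i] a).subset fun c hc => ?_
  obtain ⟨i, hi⟩ := mem_Vf.1 (h c hc a ha)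
  exact ⟨i % (m + n), Nat.mod_lt _ (by lia), by simpa [hper.iterate_mod_apply] using hi⟩

/-- If the sets `V a` are open and finite in an R0 space, rotating each of them cyclically
realizes the topology as a functional Alexandroff topology. -/
lemma isFunctionalAlexandroff_of_finite_V [t : TopologicalSpace X] [R0Space X]
    (hopen : ∀ a : X, IsOpen (V a)) (hfin : ∀ a : X, (V a).Finite) :
    IsFunctionalAlexandroff X := by
  have hcyc : ∀ s : Set X, ∃ σ : Equiv.Perm X, s.Finite → σ.IsCycleOn s := fun s => by
    by_cases hs : s.Finite
    · obtain ⟨σ, hσ, -⟩ := hs.countable.exists_cycleOn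
      exact ⟨σ, fun _ => hσ⟩
    · exact ⟨1, fun h => absurd h hs⟩
  choose σ hσ using hcyc
  have hmem (x : X) (n : ℕ) : (σ (V x) ^ n) x ∈ V x := by
    induction n with
    | zero => exact mem_V_self x
    | succ n ih =>
      rw [pow_succ', Equiv.Perm.mul_apply]
      exact (hσ _ (hfin x)).1.mapsTo ih
  have hiter (x : X) (n : ℕ) : (fun y => σ (V y) y)^[n] x = (σ (V x) ^ n) x := by
    induction n with
    | zero => rfl
    | succ n ih =>
      rw [Function.iterate_succ_apply', ih, pow_succ', Equiv.Perm.mul_apply,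
        V_eq_of_mem (hmem x n)]
  have hVf (a : X) : Vf (fun y => σ (V y) y) a = V a := by
    ext x
    simp only [mem_Vf, hiter]
    constructor
    · rintro ⟨n, rfl⟩
      rw [V_eq_of_mem (hmem x n)]
      exact mem_V_self x
    · intro hx
      rw [V_eq_of_mem hx]
      obtain ⟨n, -, hn⟩ := Equiv.Perm.IsCycleOn.exists_pow_eq (s := (hfin a).toFinset)
        (by simpa using hσ _ (hfin a)) (by simpa using hx) (by simpa using mem_V_self a)
      exact ⟨n, hn⟩
  refine ⟨fun y => σ (V y) y, le_antisymm ?_ ?_⟩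
  · refine le_generateFrom ?_
    rintro _ ⟨a, rfl⟩
    rw [hVf]
    exact hopen a
  · intro U hU
    refine (@isOpen_iff_forall_mem_open _ (funcAlexTop _) _).2 fun a ha =>
      ⟨V a, ?_, ?_, mem_V_self a⟩
    · exact sInter_subset_of_mem ⟨hU, ha⟩
    · exact TopologicalSpace.isOpen_generateFrom_of_mem ⟨a, (hVf a).symm⟩

/-- Every uniformizable `k`-primal space (`k ≥ 1`) is a functional Alexandroff
space: if there are self-maps `f₁, …, f_k` such that for every `a` the set
`V_{f₁}(a) ∩ ⋯ ∩ V_{f_k}(a)` is open and equals `V a` (i.e. it is the smallest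
open neighbourhood of `a`), then the topology of `X` is the functional
Alexandroff topology of a single self-map. -/
theorem stmt10 [TopologicalSpace X] (hU : Uniformizable X)
    (k : ℕ) (hk : 1 ≤ k) (f : Fin k → X → X)
    (hprimal : ∀ a : X, IsOpen (⋂ i : Fin k, Vf (f i) a) ∧
      (⋂ i : Fin k, Vf (f i) a) = V a) :
    IsFunctionalAlexandroff X := by
  obtain ⟨u, rfl⟩ := hU
  refine isFunctionalAlexandroff_of_finite_V (fun a => (hprimal a).2 ▸ (hprimal a).1) fun a =>
    finite_of_forall_mem_Vf (g := f ⟨0, hk⟩) fun b hb c hc => ?_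
  rw [← V_eq_of_mem hb, ← (hprimal b).2] at hc
  exact mem_iInter.1 hc _
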